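/- Let n ≥ 1 and let f : {0,1}^n → {0,1} be a conservative local rule of width n. If y : ℤ → ℤ ∪ {•} is an increasing labeling bisequence (i.e. y = ψ(s) for some strictly increasing s : ℤ → ℤ), then the bisequence f̂_∞(y) defined by f̂_∞(y)_i = f̂(y_i, y_{i+1}, …, y_{i+n−1}) is also an increasing labeling bisequence. -/

import Mathlib

/-- A local rule `f` of width `n` is `L`-conservative if for every `L`-periodic
bisequence `x : ℤ → Fin 2`, the sum of `f` applied to the `n`-blocks starting at
positions `1,…,L` equals the sum of `x` over positions `1,…,L`. -/
def LCons (n : ℕ) (f : (Fin n → Fin 2) → Fin 2) (L : ℕ) : Prop :=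
  ∀ x : ℤ → Fin 2, (∀ i : ℤ, x (i + L) = x i) →
    (∑ i ∈ Finset.range L, (f (fun k => x ((i : ℤ) + 1 + (k : ℕ)))).val) =
      ∑ i ∈ Finset.range L, (x ((i : ℤ) + 1)).val

/-- `‖k‖ = 1` if `k ∈ ℤ`, and `‖k‖ = 0` if `k = •` (here `• = none`). -/
def normO (k : Option ℤ) : Fin 2 := k.elim 0 (fun _ => 1)

/-- `G(x₁,…,xₙ) = ∑_{k=1}^{n} f(0,…,0,‖x₁‖,…,‖x_k‖)`, the `k`-th summand having
`n-k` leading zeros followed by `‖x₁‖,…,‖x_k‖`. -/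
def Ghat (n : ℕ) (f : (Fin n → Fin 2) → Fin 2) (x : Fin n → Option ℤ) : ℕ :=
  ∑ k : Fin n,
    (f (fun j : Fin n =>
      if h : (j : ℕ) + (k : ℕ) + 1 < n then 0
      else normO (x ⟨(j : ℕ) + (k : ℕ) + 1 - n, by
        have := j.isLt; have := k.isLt; omega⟩))).val

open Classical in
/-- The rule `f̂` on labeled sites corresponding to `f`: if
`f(‖x₁‖,…,‖xₙ‖) = 1` then `f̂(x₁,…,xₙ) = x_l` where `l` is the least index with
`‖x₁‖ + ⋯ + ‖x_l‖ = G(x₁,…,xₙ)`, and `f̂(x₁,…,xₙ) = •` otherwise. -/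
noncomputable def fhat (n : ℕ) (f : (Fin n → Fin 2) → Fin 2)
    (x : Fin n → Option ℤ) : Option ℤ :=
  if f (fun j => normO (x j)) = 1 then
    if h : ∃ i : ℕ, i < n ∧
        (∑ j : Fin n, if (j : ℕ) ≤ i then (normO (x j)).val else 0) = Ghat n f x
    then x ⟨Nat.find h, (Nat.find_spec h).1⟩
    else none
  else none

/-- `y : ℤ → Option ℤ` is an increasing labeling bisequence if `y = ψ(s)` for some
strictly increasing `s : ℤ → ℤ`, i.e. `y i = some j ↔ s j = i` (and `y i = none`
when `i` is not in the range of `s`). -/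
def IsLabeling (y : ℤ → Option ℤ) : Prop :=
  ∃ s : ℤ → ℤ, StrictMono s ∧ ∀ i j : ℤ, (y i = some j ↔ s j = i)

theorem aux_labeling (Y : ℤ → Option ℤ) (d : ℤ → ℤ) (φ : ℤ → Fin 2)
    (hd : ∀ i, d (i + 1) = d i + (φ (i + 1)).val)
    (hup : ∀ j, ∃ i, j ≤ d i) (hdn : ∀ j, ∃ i, d i < j)
    (hY1 : ∀ i, φ i = 1 → Y i = some (d i)) (hY0 : ∀ i, φ i ≠ 1 → Y i = none) :
    IsLabeling Y := by
  have hmono : Monotone d := monotone_int_of_le_succ (fun i => by rw [hd]; omega)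
  have key : ∀ j, ∃ i, d i = j ∧ φ i = 1 := by
    intro j
    obtain ⟨b, hb⟩ := hdn j
    obtain ⟨i, hi, hmin⟩ := Int.exists_least_of_bdd (P := fun i => j ≤ d i)
      ⟨b, fun z hz => by
        by_contra hlt
        have := hmono (le_of_lt (not_le.mp hlt))
        omega⟩ (hup j)
    have h1 : d (i - 1) < j := by
      by_contra h
      have := hmin (i - 1) (not_lt.mp h)
      omega
    have h2 := hd (i - 1)
    rw [sub_add_cancel] at h2
    have h3 := (φ i).isLt
    refine ⟨i, by omega, ?_⟩
    apply Fin.ext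
    simp only [Fin.val_one]
    omega
  choose s hs1 hs2 using key
  refine ⟨s, ?_, ?_⟩
  · intro a b hab
    by_contra h
    have := hmono (not_lt.mp h)
    rw [hs1, hs1] at this
    omega
  · intro i j
    constructor
    · intro h
      by_cases hφ : φ i = 1
      · rw [hY1 i hφ] at h
        have h : d i = j := by simpa using h
        have step : ∀ p q, p < q → φ q = 1 → d p < d q := by
          intro p q hpq hq
          have h1 : d p ≤ d (q - 1) := hmono (by omega)
          have h2 := hd (q - 1)
          rw [sub_add_cancel, hq] at h2
          simp at h2
          omega
        rcases lt_trichotomy (s j) i with hlt | heq | hgt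
        · have := step _ _ hlt hφ
          rw [hs1] at this
          omega
        · exact heq
        · have := step _ _ hgt (hs2 j)
          rw [hs1] at this
          omega
      · rw [hY0 i hφ] at h
        simp at h
    · rintro rfl
      rw [hY1 _ (hs2 j), hs1]

theorem aux_count (y : ℤ → Option ℤ) (hy : IsLabeling y) :
    ∃ c : ℤ → ℤ, (∀ i, c (i + 1) = c i + (normO (y i)).val) ∧
      (∀ i, normO (y i) = 1 → y i = some (c i)) ∧ (∀ j, ∃ i, c i = j) := by
  obtain ⟨s, hs, hsy⟩ := hy
  have hgrow : ∀ (j : ℤ) (k : ℕ), s j + k ≤ s (j + k) := by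
    intro j k
    induction k with
    | zero => simp
    | succ k ih =>
      have := hs (show j + (k : ℤ) < j + ((k + 1 : ℕ) : ℤ) by push_cast; omega)
      push_cast at *
      omega
  have key : ∀ i, ∃ j, i ≤ s j ∧ ∀ z, i ≤ s z → j ≤ z := by
    intro i
    apply Int.exists_least_of_bdd (P := fun j => i ≤ s j)
    · refine ⟨-((s 0 - i).toNat : ℤ), fun z hz => ?_⟩
      by_contra h
      push Not at h
      have := hgrow z (-z).toNat
      rw [show z + ((-z).toNat : ℤ) = 0 by omega] at this
      omega
    · refine ⟨0 + ((i - s 0).toNat : ℤ), ?_⟩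
      have := hgrow 0 (i - s 0).toNat
      omega
  choose c hc1 hc2 using key
  have hcs : ∀ j, c (s j) = j := fun j =>
    le_antisymm (hc2 _ _ le_rfl) (hs.le_iff_le.mp (hc1 (s j)))
  have hlab : ∀ i j, y i = some j → c i = j := by
    intro i j h
    rw [← (hsy i j).mp h, hcs]
  refine ⟨c, ?_, ?_, fun j => ⟨s j, hcs j⟩⟩
  · intro i
    cases hyi : y i with
    | none =>
      have hne : ∀ j, s j ≠ i := by
        intro j h
        have := (hsy i j).mpr h
        rw [hyi] at this
        simp at this
      simp only [normO, Option.elim, Fin.val_zero]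
      have h1 : c (i + 1) ≤ c i := hc2 _ _ (by have := hc1 i; have := hne (c i); omega)
      have h2 : c i ≤ c (i + 1) := hc2 _ _ (by have := hc1 (i + 1); omega)
      simp; omega
    | some j =>
      have h0 := hlab _ _ hyi
      have hsj := (hsy i j).mp hyi
      simp only [normO, Option.elim, Fin.val_one]
      have h1 : c (i + 1) ≤ j + 1 := hc2 _ _ (by
        have := hs (show j < j + 1 by omega)
        omega)
      have h2 : j < c (i + 1) := hs.lt_iff_lt.mp (by have := hc1 (i + 1); omega)
      push_cast; omega
  · intro i h
    cases hyi : y i with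
    | none => rw [hyi] at h; simp [normO] at h
    | some j => rw [hlab _ _ hyi]

theorem aux_fin (n : ℕ) (f : (Fin n → Fin 2) → Fin 2)
    (hf : ∀ L : ℕ, 0 < L → LCons n f L) (L : ℕ) (hL : 0 < L) (w : ℕ → Fin 2)
    (h0 : ∀ m, m < n → w m = 0) (h1 : ∀ m, L ≤ m → w m = 0) (hnL : n ≤ L) (hn : 1 ≤ n) :
    ∑ i ∈ Finset.range L, (f (fun k => w (i + 1 + k))).val =
      ∑ i ∈ Finset.range L, (w (i + 1)).val := by
  have h := hf L hL (fun i => w (i % (L : ℤ)).toNat) (fun i => by simp)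
  have hp : ∀ m : ℕ, m < L + n → w ((m : ℤ) % (L : ℤ)).toNat = w m := by
    intro m hm
    have e : ((m : ℤ) % (L : ℤ)).toNat = m % L := by
      rw [← Int.natCast_mod, Int.toNat_natCast]
    rw [e]
    by_cases hmL : m < L
    · rw [Nat.mod_eq_of_lt hmL]
    · push Not at hmL
      rw [h1 m hmL]
      apply h0
      by_cases hh : m - L < L
      · rw [Nat.mod_eq_sub_mod hmL, Nat.mod_eq_of_lt hh]; omega
      · omega
  convert h using 1
  · apply Finset.sum_congr rfl
    intro i hi
    rw [Finset.mem_range] at hi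
    congr 2
    funext k
    have := hp (i + 1 + k) (by have := k.isLt; omega)
    push_cast at this
    exact this.symm
  · apply Finset.sum_congr rfl
    intro i hi
    rw [Finset.mem_range] at hi
    have := hp (i + 1) (by omega)
    push_cast at this
    rw [this]

/-- Count of images of the sequence cut off to the left. -/
def gcut (n : ℕ) (f : (Fin n → Fin 2) → Fin 2) (u : ℕ → Fin 2) : ℕ :=
  ∑ k ∈ Finset.range n, (f (fun j => if (j : ℕ) + k + 1 < n then 0 else u (j + k + 1 - n))).val

theorem gcut_eq (n : ℕ) (f : (Fin n → Fin 2) → Fin 2) (y : ℤ → Option ℤ) (i : ℤ) :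
    Ghat n f (fun k => y (i + (k : ℕ))) = gcut n f (fun m => normO (y (i + (m : ℕ)))) := by
  unfold Ghat gcut
  rw [← Fin.sum_univ_eq_sum_range (fun k => (f (fun j : Fin n => if (j : ℕ) + k + 1 < n then 0
    else normO (y (i + ((j + k + 1 - n : ℕ) : ℤ))))).val) n]
  apply Finset.sum_congr rfl
  intro k _
  simp only [dite_eq_ite]

theorem gcut_le (n : ℕ) (hn : 1 ≤ n) (f : (Fin n → Fin 2) → Fin 2)
    (hf : ∀ L : ℕ, 0 < L → LCons n f L) (u : ℕ → Fin 2) :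
    gcut n f u ≤ ∑ k ∈ Finset.range n, (u k).val := by
  have h := aux_fin n f hf (n + n) (by omega)
    (fun m => if m < n then 0 else if n + n ≤ m then 0 else u (m - n))
    (fun m hm => by simp [hm]) (fun m hm => by simp [hm]) (by omega) hn
  rw [Finset.sum_range_add] at h
  have e1 : gcut n f u = ∑ i ∈ Finset.range n, (f (fun k => (fun m => if m < n then (0 : Fin 2) else
      if n + n ≤ m then 0 else u (m - n)) (i + 1 + k))).val := by
    apply Finset.sum_congr rfl
    intro i hi
    rw [Finset.mem_range] at hi
    congr 2
    funext j
    have := j.isLt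
    have e : i + 1 + (j : ℕ) = j + i + 1 := by omega
    simp only [e]
    rw [if_neg (show ¬ (n + n ≤ (j : ℕ) + i + 1) by omega)]
  have e2 : ∑ i ∈ Finset.range (n + n), ((fun m => if m < n then (0 : Fin 2) else
      if n + n ≤ m then 0 else u (m - n)) (i + 1)).val = ∑ k ∈ Finset.range n, (u k).val := by
    obtain ⟨p, rfl⟩ : ∃ p, n = p + 1 := ⟨n - 1, by omega⟩
    rw [show p + 1 + (p + 1) = p + (p + 1) + 1 by omega, Finset.sum_range_succ,
      Finset.sum_range_add]
    rw [Finset.sum_eq_zero (s := Finset.range p)]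
    · have : ∀ x ∈ Finset.range (p + 1), ((fun m => if m < p + 1 then (0 : Fin 2) else
        if p + (p + 1) + 1 ≤ m then 0 else u (m - (p + 1))) (p + x + 1)).val = (u x).val := by
        intro x hx
        rw [Finset.mem_range] at hx
        simp only
        rw [if_neg (by omega), if_neg (by omega)]
        congr 2
        omega
      rw [Finset.sum_congr rfl this]
      simp
    · intro x hx
      rw [Finset.mem_range] at hx
      simp [hx]
  simp only at e1 e2
  omega

theorem f_zero (n : ℕ) (f : (Fin n → Fin 2) → Fin 2)
    (hf : ∀ L : ℕ, 0 < L → LCons n f L) : f (fun _ => 0) = 0 := by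
  have := hf 1 one_pos (fun _ => 0) (fun _ => rfl)
  simp at this
  exact this

theorem gcut_step (n : ℕ) (hn : 1 ≤ n) (f : (Fin n → Fin 2) → Fin 2)
    (hf : ∀ L : ℕ, 0 < L → LCons n f L) (u : ℕ → Fin 2) :
    gcut n f u + (f (fun k => u (1 + k))).val = (u 0).val + gcut n f (fun m => u (m + 1)) := by
  have H : ∀ t, n ≤ t → _ := fun t ht => aux_fin n f hf (n + n + 1) (by omega)
    (fun m => if m < t then 0 else if n + n + 1 ≤ m then 0 else u (m - n))
    (fun m hm => by simp [show m < t by omega]) (fun m hm => by simp [hm]) (by omega) hn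
  have hA := H n le_rfl
  have hB := H (n + 1) (by omega)
  rw [show n + n + 1 = n + (1 + n) by omega, Finset.sum_range_add, Finset.sum_range_add _ 1 n,
    Finset.sum_range_one] at hA
  rw [show n + n + 1 = (1 + n) + n by omega, Finset.sum_range_add, Finset.sum_range_add _ 1 n,
    Finset.sum_range_one] at hB
  have a1 : ∑ i ∈ Finset.range n, (f (fun k => (if i + 1 + (k : ℕ) < n then (0 : Fin 2) else
      if n + (1 + n) ≤ i + 1 + k then 0 else u (i + 1 + k - n)))).val = gcut n f u := by
    apply Finset.sum_congr rfl
    intro i hi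
    rw [Finset.mem_range] at hi
    congr 2
    funext j
    have := j.isLt
    have e : i + 1 + (j : ℕ) = j + i + 1 := by omega
    simp only [e]
    rw [if_neg (show ¬ (n + (1 + n) ≤ (j : ℕ) + i + 1) by omega)]
  have a2 : f (fun k => (if n + 0 + 1 + (k : ℕ) < n then (0 : Fin 2) else
      if n + (1 + n) ≤ n + 0 + 1 + k then 0 else u (n + 0 + 1 + k - n))) =
      f (fun k => u (1 + k)) := by
    congr 1
    funext j
    have := j.isLt
    rw [if_neg (by omega), if_neg (by omega)]
    congr 1
    omega
  have b0 : f (fun k => (if 0 + 1 + (k : ℕ) < n + 1 then (0 : Fin 2) else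
      if 1 + n + n ≤ 0 + 1 + k then 0 else u (0 + 1 + k - n))) = 0 := by
    refine Eq.trans ?_ (f_zero n f hf)
    congr 1
    funext j
    have := j.isLt
    rw [if_pos (by omega)]
  have b1 : ∑ i ∈ Finset.range n, (f (fun k => (if 1 + i + 1 + (k : ℕ) < n + 1 then (0 : Fin 2) else
      if 1 + n + n ≤ 1 + i + 1 + k then 0 else u (1 + i + 1 + k - n)))).val
      = gcut n f (fun m => u (m + 1)) := by
    apply Finset.sum_congr rfl
    intro i hi
    rw [Finset.mem_range] at hi
    congr 2
    funext j
    have := j.isLt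
    by_cases hh : (j : ℕ) + i + 1 < n
    · rw [if_pos (by omega), if_pos hh]
    · rw [if_neg (by omega), if_neg (by omega), if_neg hh]
      congr 1
      omega
  have ab : ∑ i ∈ Finset.range n, (f (fun k => (if n + (1 + i) + 1 + (k : ℕ) < n then (0 : Fin 2) else
      if n + (1 + n) ≤ n + (1 + i) + 1 + k then 0 else u (n + (1 + i) + 1 + k - n)))).val
      = ∑ i ∈ Finset.range n, (f (fun k => (if 1 + n + i + 1 + (k : ℕ) < n + 1 then (0 : Fin 2) else
      if 1 + n + n ≤ 1 + n + i + 1 + k then 0 else u (1 + n + i + 1 + k - n)))).val := by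
    apply Finset.sum_congr rfl
    intro i hi
    congr 2
    funext j
    rw [if_neg (show ¬ (n + (1 + i) + 1 + (j : ℕ) < n) by omega),
      if_neg (show ¬ (1 + n + i + 1 + (j : ℕ) < n + 1) by omega),
      show n + (1 + n) = 1 + n + n by omega, show n + (1 + i) = 1 + n + i by omega]
  have c : ∑ i ∈ Finset.range (n + (1 + n)), (if i + 1 < n then (0 : Fin 2) else
      if n + (1 + n) ≤ i + 1 then 0 else u (i + 1 - n)).val = (u 0).val +
      ∑ i ∈ Finset.range (1 + n + n), (if i + 1 < n + 1 then (0 : Fin 2) else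
      if 1 + n + n ≤ i + 1 then 0 else u (i + 1 - n)).val := by
    rw [show n + (1 + n) = 1 + n + n by omega]
    have hmem : n - 1 ∈ Finset.range (1 + n + n) := by rw [Finset.mem_range]; omega
    rw [← Finset.add_sum_erase _ _ hmem, ← Finset.add_sum_erase (Finset.range (1 + n + n)) (fun i =>
      (if i + 1 < n + 1 then (0 : Fin 2) else
      if 1 + n + n ≤ i + 1 then 0 else u (i + 1 - n)).val) hmem]
    rw [if_neg (by omega), if_neg (by omega), if_pos (by omega),
      show n - 1 + 1 - n = 0 by omega]
    simp only [Fin.val_zero, zero_add]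
    congr 1
    apply Finset.sum_congr rfl
    intro i hi
    simp only [Finset.mem_erase, Finset.mem_range] at hi
    by_cases hh : i + 1 < n
    · rw [if_pos hh, if_pos (by omega)]
    · rw [if_neg hh, if_neg (show ¬ (i + 1 < n + 1) by omega)]
  rw [a1, a2, ab, c] at hA
  rw [b0, b1] at hB
  simp only [Fin.val_zero] at hB
  omega

/-- If `f` is a conservative rule of width `n ≥ 1` and `y` is an increasing
labeling bisequence, then `f̂_∞(y)`, defined by
`f̂_∞(y)ᵢ = f̂(yᵢ, y_{i+1}, …, y_{i+n-1})`, is also an increasing labeling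
bisequence. -/
theorem stmt_10 (n : ℕ) (hn : 1 ≤ n) (f : (Fin n → Fin 2) → Fin 2)
    (hf : ∀ L : ℕ, 0 < L → LCons n f L)
    (y : ℤ → Option ℤ) (hy : IsLabeling y) :
    IsLabeling (fun i : ℤ => fhat n f (fun k => y (i + (k : ℕ)))) := by
  obtain ⟨c, hc, hcy, hcs⟩ := aux_count y hy
  have hsum : ∀ (i : ℤ) (l : ℕ),
      ((∑ j ∈ Finset.range l, (normO (y (i + (j : ℕ)))).val : ℕ) : ℤ) = c (i + l) - c i := by
    intro i l
    induction l with
    | zero => simp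
    | succ l ih =>
      have := hc (i + l)
      rw [Finset.sum_range_succ]
      push_cast at *
      rw [ih, ← add_assoc, this]
      omega
  set G : ℤ → ℕ := fun i => gcut n f (fun m => normO (y (i + (m : ℕ)))) with hG
  have hGle : ∀ i, G i ≤ ∑ k ∈ Finset.range n, (normO (y (i + (k : ℕ)))).val :=
    fun i => gcut_le n hn f hf _
  have hGn : ∀ i, G i ≤ n := by
    intro i
    refine (hGle i).trans ?_
    calc _ ≤ ∑ k ∈ Finset.range n, 1 := Finset.sum_le_sum (fun k _ => by omega)
      _ = n := by simp
  have hstep : ∀ i, G i + (f (fun k => normO (y (i + 1 + (k : ℕ))))).val =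
      (normO (y i)).val + G (i + 1) := by
    intro i
    have := gcut_step n hn f hf (fun m => normO (y (i + (m : ℕ))))
    simp only [hG]
    convert this using 6
    · push_cast; ring_nf
    · simp
    · push_cast; ring_nf
  apply aux_labeling _ (fun i => c i + G i - 1) (fun i => f (fun k => normO (y (i + (k : ℕ)))))
  · intro i
    have := hstep i
    have := hc i
    omega
  · intro j
    obtain ⟨i, hi⟩ := hcs (j + 1)
    exact ⟨i, by omega⟩
  · intro j
    obtain ⟨i, hi⟩ := hcs (j - n)
    refine ⟨i, ?_⟩
    have := hGn i
    omega
  · intro i hi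
    have hP : ∀ l, l < n → (∑ j : Fin n, if (j : ℕ) ≤ l then (normO (y (i + (j : ℕ)))).val else 0)
        = ∑ j ∈ Finset.range (l + 1), (normO (y (i + (j : ℕ)))).val := by
      intro l hl
      rw [Fin.sum_univ_eq_sum_range
        (fun j => if j ≤ l then (normO (y (i + (j : ℕ)))).val else 0) n]
      rw [← Finset.sum_filter]
      apply Finset.sum_congr _ (fun _ _ => rfl)
      ext j
      simp
      omega
    have hG1 : 1 ≤ G i := by
      have : (fun k => (f (fun j => if (j : ℕ) + k + 1 < n then 0 else
          normO (y (i + ((j + k + 1 - n : ℕ) : ℤ))))).val) (n - 1) ≤ G i :=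
        Finset.single_le_sum (f := fun k => (f (fun j => if (j : ℕ) + k + 1 < n then 0 else
          normO (y (i + ((j + k + 1 - n : ℕ) : ℤ))))).val)
          (fun _ _ => Nat.zero_le _) (Finset.mem_range.mpr (by omega))
      refine le_trans (le_of_eq ?_) this
      have e : (fun j : Fin n => if (j : ℕ) + (n - 1) + 1 < n then 0 else
          normO (y (i + ((j + (n - 1) + 1 - n : ℕ) : ℤ)))) = fun k : Fin n => normO (y (i + ((k : ℕ) : ℤ))) := by
        funext j
        rw [if_neg (by omega), show (j : ℕ) + (n - 1) + 1 - n = j by omega]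
      simp only [e, hi]
      simp
    have hGh : Ghat n f (fun k => y (i + (k : ℕ))) = G i := gcut_eq n f y i
    have hex : ∃ l : ℕ, l < n ∧ (∑ j : Fin n, if (j : ℕ) ≤ l then
        (normO (y (i + (j : ℕ)))).val else 0) = Ghat n f (fun k => y (i + (k : ℕ))) := by
      have h1 : ∃ l : ℕ, G i ≤ ∑ j ∈ Finset.range l, (normO (y (i + (j : ℕ)))).val := ⟨n, hGle i⟩
      classical
      have hs := Nat.find_spec h1
      have hle : Nat.find h1 ≤ n := Nat.find_min' h1 (hGle i)
      have hm : ∀ m, m < Nat.find h1 → _ := fun m => Nat.find_min h1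
      generalize Nat.find h1 = l at hs hle hm
      cases l with
      | zero => simp at hs; omega
      | succ l =>
        refine ⟨l, by omega, ?_⟩
        rw [hP l (by omega), hGh]
        have := hm l (by omega)
        rw [Finset.sum_range_succ] at hs ⊢
        have := (normO (y (i + (l : ℕ)))).isLt
        omega
    simp only [fhat]
    rw [if_pos hi, dif_pos hex]
    have hs := Nat.find_spec hex
    have hm : ∀ m, m < Nat.find hex → _ := fun m => Nat.find_min hex
    generalize Nat.find hex = l at hs hm
    obtain ⟨hl, hs⟩ := hs
    rw [hP l hl, hGh] at hs
    have hone : normO (y (i + (l : ℕ))) = 1 := by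
      by_contra hne
      have h0 : (normO (y (i + (l : ℕ)))).val = 0 := by
        have := (normO (y (i + (l : ℕ)))).isLt
        have : (normO (y (i + (l : ℕ)))).val ≠ 1 := fun h => hne (Fin.ext h)
        omega
      rw [Finset.sum_range_succ, h0] at hs
      cases l with
      | zero => simp at hs; omega
      | succ l =>
        apply hm l (by omega)
        refine ⟨by omega, ?_⟩
        rw [hP l (by omega), hGh]
        exact hs
    rw [hcy _ hone]
    congr 1
    have h1 := hsum i (l + 1)
    rw [hs] at h1
    have h2 := hc (i + l)
    rw [hone] at h2
    push_cast at h1 h2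
    rw [← add_assoc] at h1
    simp at h2
    omega
  · intro i hi
    unfold fhat
    rw [if_neg hi]
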